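/- Let 1/3 < λ < 1, ξ ∈ ℝ, b, σ ∈ C_b²(ℝ;ℝ) with inf σ > 0, and for g ∈ C^λ₀([0,1];ℝ) let x_·(ξ,g) be the Doss–Sussmann solution. Set W = σb' − σ'b and J_t(g) = (σ(x_t(ξ,g))/σ(ξ))·exp(∫₀^t (W/σ)(x_u(ξ,g)) du). Then for every g, h ∈ C^λ₀([0,1];ℝ) and t ∈ [0,1], the directional derivative ∇_h x_t(ξ,g) := lim_{ε→0} (x_t(ξ,g+εh) − x_t(ξ,g))/ε exists and equals σ(x_t(ξ,g))·h_t + ∫₀^t J_t(g)·J_s(g)⁻¹·W(x_s(ξ,g))·h_s ds. -/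

import Mathlib

/-- `f` is in `C_b^n(ℝ;ℝ)`. -/
def CbN (n : ℕ) (f : ℝ → ℝ) : Prop :=
  ContDiff ℝ n f ∧ ∀ i ≤ n, ∃ M : ℝ, ∀ x : ℝ, |iteratedDeriv i f x| ≤ M

/-- `f_{σ,b}(x,y) = exp(−∫₀^y σ'(φ(x,η))dη) · b(φ(x,y))`. -/
noncomputable def fsb (b σ : ℝ → ℝ) (φ : ℝ → ℝ → ℝ) (x y : ℝ) : ℝ :=
  Real.exp (-(∫ η in (0:ℝ)..y, deriv σ (φ x η))) * b (φ x y)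

/-- The Wronskian-type function `W = σb' − σ'b`. -/
noncomputable def Wf (b σ : ℝ → ℝ) (x : ℝ) : ℝ := σ x * deriv b x - deriv σ x * b x

/-- `J_t = (σ(x_t)/σ(ξ)) · exp(∫₀ᵗ (W/σ)(x_u) du)` for a path `x`. -/
noncomputable def Jpath (b σ : ℝ → ℝ) (ξ : ℝ) (x : ℝ → ℝ) (t : ℝ) : ℝ :=
  (σ (x t) / σ ξ) * Real.exp (∫ u in (0:ℝ)..t, Wf b σ (x u) / σ (x u))

/-!
For `σ` without zeros, the Lamperti transform `H(x) = ∫_ξ^x du/σ(u)` straightens the flow of `σ`: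
`φ(x, β) = φ(ξ, H(x) + β)`. Hence `x_t = φ(ξ, z_t + g_t)`, where `z = H(a)` solves
`z' = G(z + g)` with `G = (b/σ)(φ(ξ, ·))` and `G' = (W/σ)(φ(ξ, ·))`, an ordinary differential
equation in which the driver enters only as an additive perturbation. A Grönwall estimate shows that
`z` is differentiable in the driver, with derivative in the direction `h` the solution `w` of
`w' = G'(z + g) (w + h)`, `w_0 = 0`. Variation of constants solves this equation, and the chain rule
for `φ(ξ, ·)` gives the formula.
-/

open Set Filter Topology MeasureTheory

section AdditivePerturbation

theorem eventually_mul_norm_le {E : Type*} [SeminormedAddCommGroup E] (C : ℝ) {δ : ℝ}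
    (hδ : 0 < δ) :
    ∀ᶠ x in 𝓝 (0 : E), C * ‖x‖ ≤ δ := by
  have hlim : Tendsto (fun x : E => C * ‖x‖) (𝓝 0) (𝓝 0) := by
    simpa using (continuous_norm.const_mul C).tendsto (0 : E)
  exact hlim.eventually_le_const hδ

variable {E F : Type*} [NormedAddCommGroup E] [NormedSpace ℝ E] [NormedAddCommGroup F]
  [NormedSpace ℝ F]

/- Unlike in Mathlib's Grönwall inequality, the differential inequality is required only while `f`
stays below `r`; this is what allows coefficients that are merely locally Lipschitz. -/
theorem norm_le_mul_exp_of_norm_deriv_le_of_norm_le {f f' : ℝ → E} {a b K e r : ℝ}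
    (hK : 0 ≤ K) (he : 0 < e) (hr : e * Real.exp ((K + 1) * (b - a)) ≤ r)
    (hf : ∀ t ∈ Icc a b, HasDerivWithinAt f (f' t) (Icc a b) t) (hfa : f a = 0)
    (hf' : ∀ t ∈ Icc a b, ‖f t‖ ≤ r → ‖f' t‖ ≤ K * ‖f t‖ + e) {t : ℝ} (ht : t ∈ Icc a b) :
    ‖f t‖ ≤ e * Real.exp ((K + 1) * (b - a)) := by
  set B : ℝ → ℝ := fun s => e * Real.exp ((K + 1) * (s - a)) with hB
  have hB_deriv (s : ℝ) : HasDerivAt B ((K + 1) * B s) s := by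
    refine ((((hasDerivAt_id s).sub_const a).const_mul (K + 1)).exp.const_mul e).congr_deriv ?_
    simp only [hB, id]
    ring
  have hB_le {s : ℝ} (hs : s ≤ b) : B s ≤ B b := by
    simp only [hB]
    gcongr
  refine (image_norm_le_of_norm_deriv_right_lt_deriv_boundary
    (fun s hs => (hf s hs).continuousWithinAt)
    (fun s hs => (hf s (Ico_subset_Icc_self hs)).mono_of_mem_nhdsWithin
      (Icc_mem_nhdsGE_of_mem hs))
    (by simp [hfa, hB, he.le]) hB_deriv (fun s hs hfs => ?_) ht).trans (hB_le ht.2)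
  have has : a < s := by
    refine hs.1.lt_of_ne fun h => ?_
    subst h
    simp [hfa, hB, he.ne] at hfs
  have heB : e < B s :=
    lt_mul_of_one_lt_right he (Real.one_lt_exp_iff.2 (mul_pos (by linarith) (sub_pos.2 has)))
  calc ‖f' s‖ ≤ K * ‖f s‖ + e :=
        hf' s (Ico_subset_Icc_self hs) (hfs.le.trans ((hB_le hs.2.le).trans hr))
    _ < (K + 1) * B s := by rw [hfs]; linarith

theorem exists_forall_norm_sub_sub_fderiv_le {G : E → F} (hG : ContDiff ℝ 1 G) {S : Set E}
    (hS : IsCompact S) {η : ℝ} (hη : 0 < η) :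
    ∃ δ > 0, ∀ y ∈ S, ∀ v, ‖v‖ ≤ δ → ‖G (y + v) - G y - fderiv ℝ G y v‖ ≤ η * ‖v‖ := by
  have hcont : Continuous (fderiv ℝ G) := hG.continuous_fderiv one_ne_zero
  obtain ⟨δ, hδ, hδη⟩ := Metric.mem_uniformity_dist.1
    (hS.uniformContinuousAt_of_continuousAt (fderiv ℝ G) (fun _ _ => hcont.continuousAt)
      (Metric.dist_mem_uniformity hη))
  refine ⟨δ / 2, half_pos hδ, fun y hy v hv => ?_⟩
  have hball : ∀ x ∈ Metric.closedBall y (δ / 2), ‖fderiv ℝ G x - fderiv ℝ G y‖ ≤ η := by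
    intro x hx
    have hyx : dist y x < δ := (dist_comm y x).trans_lt (hx.trans_lt (half_lt_self hδ))
    rw [← dist_eq_norm, dist_comm]
    exact (hδη hyx hy).le
  simpa using (convex_closedBall y (δ / 2)).norm_image_sub_le_of_norm_fderiv_le'
    (fun x _ => hG.differentiable one_ne_zero x) hball
    (Metric.mem_closedBall_self (half_pos hδ).le) (y := y + v) (by simpa using hv)

theorem exists_forall_norm_fderiv_le {G : E → F} (hG : ContDiff ℝ 1 G) {S : Set E}
    (hS : IsCompact S) : ∃ K > 0, ∀ y ∈ S, ‖fderiv ℝ G y‖ ≤ K := by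
  simpa using (hS.image (hG.continuous_fderiv one_ne_zero)).isBounded.exists_pos_norm_le

theorem exists_forall_norm_sub_le {G : E → F} (hG : ContDiff ℝ 1 G) {S : Set E}
    (hS : IsCompact S) :
    ∃ K > 0, ∃ δ > 0, ∀ y ∈ S, ∀ v, ‖v‖ ≤ δ → ‖G (y + v) - G y‖ ≤ K * ‖v‖ := by
  obtain ⟨δ, hδ, hexp⟩ := exists_forall_norm_sub_sub_fderiv_le hG hS one_pos
  obtain ⟨K, hK, hderiv⟩ := exists_forall_norm_fderiv_le hG hS
  refine ⟨K + 1, by positivity, δ, hδ, fun y hy v hv => ?_⟩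
  calc ‖G (y + v) - G y‖
      = ‖fderiv ℝ G y v + (G (y + v) - G y - fderiv ℝ G y v)‖ := by congr 1; abel
    _ ≤ K * ‖v‖ + 1 * ‖v‖ :=
        norm_add_le_of_le ((fderiv ℝ G y).le_of_opNorm_le (hderiv y hy) v) (hexp y hy v hv)
    _ = (K + 1) * ‖v‖ := by ring

variable {G : E → E} {g h w : ℝ → E} {z : ℝ → ℝ → E} {a b : ℝ}

theorem exists_eventually_norm_perturbation_le (hG : ContDiff ℝ 1 G)
    (hg : ContinuousOn g (Icc a b)) (hh : ContinuousOn h (Icc a b)) (hza : ∀ ε, z ε a = z 0 a)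
    (hz : ∀ ε, IsIntegralCurveOn (z ε) (fun t y => G (y + (g t + ε • h t))) (Icc a b)) :
    ∃ C > 0, ∀ᶠ ε in 𝓝 (0 : ℝ), ∀ t ∈ Icc a b, ‖z ε t - z 0 t + ε • h t‖ ≤ C * ‖ε‖ := by
  obtain ⟨K, hK, δ, hδ, hlip⟩ := exists_forall_norm_sub_le hG
    (isCompact_Icc.image_of_continuousOn ((hz 0).continuousOn.add hg))
  obtain ⟨M, hM, hhM⟩ := (isCompact_Icc.image_of_continuousOn hh).isBounded.exists_pos_norm_le
  have hεh (ε : ℝ) : ∀ t ∈ Icc a b, ‖ε • h t‖ ≤ M * ‖ε‖ := fun t ht => by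
    rw [norm_smul, mul_comm]
    gcongr
    exact hhM _ (mem_image_of_mem h ht)
  set c : ℝ := Real.exp ((K + 1) * (b - a))
  refine ⟨K * M * c + M, by positivity, ?_⟩
  filter_upwards [eventually_mul_norm_le M (half_pos hδ),
    eventually_mul_norm_le (K * M * c) (half_pos hδ)] with ε hεM hεr t ht
  obtain rfl | hε := eq_or_ne ε 0
  · simp
  suffices ‖z ε t - z 0 t‖ ≤ K * M * ‖ε‖ * c from
    (norm_add_le_of_le this (hεh ε t ht)).trans_eq (by ring)
  refine norm_le_mul_exp_of_norm_deriv_le_of_norm_le (f := fun t => z ε t - z 0 t) (r := δ / 2)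
    hK.le (by positivity) (by linarith) (fun s hs => (hz ε s hs).sub (hz 0 s hs)) (by simp [hza])
    (fun s hs hsr => ?_) ht
  have hv : ‖z ε s - z 0 s + ε • h s‖ ≤ ‖z ε s - z 0 s‖ + M * ‖ε‖ :=
    norm_add_le_of_le le_rfl (hεh ε s hs)
  calc ‖G (z ε s + (g s + ε • h s)) - G (z 0 s + (g s + (0 : ℝ) • h s))‖
      = ‖G (z 0 s + g s + (z ε s - z 0 s + ε • h s)) - G (z 0 s + g s)‖ := by
        rw [zero_smul, add_zero]; congr 3; abel
    _ ≤ K * ‖z ε s - z 0 s + ε • h s‖ := hlip _ (mem_image_of_mem _ hs) _ (by linarith)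
    _ ≤ K * (‖z ε s - z 0 s‖ + M * ‖ε‖) := by gcongr
    _ = K * ‖z ε s - z 0 s‖ + K * M * ‖ε‖ := by ring

theorem eventually_forall_norm_sub_sub_fderiv_le {ι : Type*} {G : E → F} (hG : ContDiff ℝ 1 G)
    {I : Set ι} {y : ι → E} (hy : IsCompact (y '' I)) {v : ℝ → ι → E} {C : ℝ} (hC : 0 < C)
    (hv : ∀ᶠ ε in 𝓝 (0 : ℝ), ∀ t ∈ I, ‖v ε t‖ ≤ C * ‖ε‖) {η : ℝ} (hη : 0 < η) :
    ∀ᶠ ε in 𝓝 (0 : ℝ), ∀ t ∈ I,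
      ‖G (y t + v ε t) - G (y t) - fderiv ℝ G (y t) (v ε t)‖ ≤ η * ‖ε‖ := by
  obtain ⟨δ, hδ, hexp⟩ := exists_forall_norm_sub_sub_fderiv_le hG hy (div_pos hη hC)
  filter_upwards [hv, eventually_mul_norm_le C hδ] with ε hεv hεδ t ht
  calc ‖G (y t + v ε t) - G (y t) - fderiv ℝ G (y t) (v ε t)‖
      ≤ η / C * ‖v ε t‖ := hexp _ (mem_image_of_mem y ht) _ ((hεv t ht).trans hεδ)
    _ ≤ η / C * (C * ‖ε‖) := by gcongr; exact hεv t ht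
    _ = η * ‖ε‖ := by field_simp

theorem hasDerivAt_of_isIntegralCurveOn_perturbation (hG : ContDiff ℝ 1 G)
    (hg : ContinuousOn g (Icc a b)) (hh : ContinuousOn h (Icc a b)) (hza : ∀ ε, z ε a = z 0 a)
    (hz : ∀ ε, IsIntegralCurveOn (z ε) (fun t y => G (y + (g t + ε • h t))) (Icc a b))
    (hwa : w a = 0)
    (hw : IsIntegralCurveOn w (fun t v => fderiv ℝ G (z 0 t + g t) (v + h t)) (Icc a b))
    {t : ℝ} (ht : t ∈ Icc a b) : HasDerivAt (fun ε => z ε t) (w t) 0 := by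
  set y : ℝ → E := fun t => z 0 t + g t with hy
  have hyc : IsCompact (y '' Icc a b) :=
    isCompact_Icc.image_of_continuousOn ((hz 0).continuousOn.add hg)
  obtain ⟨K, hK, hderiv⟩ := exists_forall_norm_fderiv_le hG hyc
  obtain ⟨C, hC, hbound⟩ := exists_eventually_norm_perturbation_le hG hg hh hza hz
  rw [hasDerivAt_iff_isLittleO, Asymptotics.isLittleO_iff]
  intro c hc
  set x : ℝ := Real.exp ((K + 1) * (b - a)) with hx
  filter_upwards [eventually_forall_norm_sub_sub_fderiv_le hG hyc hC hbound
    (div_pos hc (Real.exp_pos _) : 0 < c / x)] with ε hrem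
  obtain rfl | hε := eq_or_ne ε 0
  · simp
  rw [sub_zero, show c * ‖ε‖ = c / x * ‖ε‖ * x by rw [hx]; field_simp]
  refine norm_le_mul_exp_of_norm_deriv_le_of_norm_le (f := fun t => z ε t - z 0 t - ε • w t)
    hK.le (by positivity) le_rfl
    (fun s hs => ((hz ε s hs).sub (hz 0 s hs)).sub ((hw s hs).const_smul ε)) (by simp [hza, hwa])
    (fun s hs _ => ?_) ht
  set v : E := z ε s - z 0 s + ε • h s with hv
  have hlin : ‖fderiv ℝ G (y s) (z ε s - z 0 s - ε • w s)‖ ≤ K * ‖z ε s - z 0 s - ε • w s‖ :=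
    (fderiv ℝ G (y s)).le_of_opNorm_le (hderiv _ (mem_image_of_mem y hs)) _
  calc ‖G (z ε s + (g s + ε • h s)) - G (z 0 s + (g s + (0 : ℝ) • h s))
          - ε • fderiv ℝ G (y s) (w s + h s)‖
      = ‖fderiv ℝ G (y s) (z ε s - z 0 s - ε • w s)
          + (G (y s + v) - G (y s) - fderiv ℝ G (y s) v)‖ := by
        have hyv : z ε s + (g s + ε • h s) = y s + v := by simp only [hy, hv]; abel
        rw [hyv, zero_smul, add_zero, hv]
        simp only [map_sub, map_add, map_smul, smul_add]
        congr 1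
        abel
    _ ≤ K * ‖z ε s - z 0 s - ε • w s‖ + c / x * ‖ε‖ := norm_add_le_of_le hlin (hrem s hs)

end AdditivePerturbation

section VariationOfConstants

theorem hasDerivWithinAt_integral_Icc {E : Type*} [NormedAddCommGroup E] [NormedSpace ℝ E]
    [CompleteSpace E] {k : ℝ → E} {a b t : ℝ} (hk : ContinuousOn k (Icc a b))
    (ht : t ∈ Icc a b) :
    HasDerivWithinAt (fun t => ∫ u in a..t, k u) (k t) (Icc a b) t := by
  have : Fact (t ∈ Icc a b) := ⟨ht⟩
  have hat : uIcc a t ⊆ Icc a b := uIcc_subset_Icc (left_mem_Icc.2 (ht.1.trans ht.2)) ht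
  exact intervalIntegral.integral_hasDerivWithinAt_right (hk.mono hat).intervalIntegrable
    (hk.stronglyMeasurableAtFilter_nhdsWithin measurableSet_Icc t) (hk t ht)

variable {g h : ℝ → ℝ} {a b : ℝ}

theorem isIntegralCurveOn_exp_integral_mul {q : ℝ → ℝ} (hq : ContinuousOn q (Icc a b))
    (hh : ContinuousOn h (Icc a b)) :
    IsIntegralCurveOn
      (fun t => Real.exp (∫ u in a..t, q u) *
        ∫ s in a..t, Real.exp (-∫ u in a..s, q u) * (q s * h s))
      (fun t v => q t * (v + h t)) (Icc a b) := by
  intro t ht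
  have hI : ∀ s ∈ Icc a b, HasDerivWithinAt (fun s => ∫ u in a..s, q u) (q s) (Icc a b) s :=
    fun s hs => hasDerivWithinAt_integral_Icc hq hs
  have hIc : ContinuousOn (fun s => ∫ u in a..s, q u) (Icc a b) :=
    fun s hs => (hI s hs).continuousWithinAt
  have hIntegrand : ContinuousOn (fun s => Real.exp (-∫ u in a..s, q u) * (q s * h s)) (Icc a b) :=
    hIc.neg.rexp.mul (hq.mul hh)
  refine ((hI t ht).exp.mul (hasDerivWithinAt_integral_Icc hIntegrand ht)).congr_deriv ?_
  have hexp : Real.exp (∫ u in a..t, q u) * Real.exp (-∫ u in a..t, q u) = 1 := by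
    rw [← Real.exp_add, add_neg_cancel, Real.exp_zero]
  linear_combination (q t * h t) * hexp

theorem hasDerivAt_of_isIntegralCurveOn_perturbation_real {G G' : ℝ → ℝ} {z : ℝ → ℝ → ℝ}
    (hG : ∀ y, HasDerivAt G (G' y) y) (hG' : Continuous G') (hg : ContinuousOn g (Icc a b))
    (hh : ContinuousOn h (Icc a b)) (hza : ∀ ε, z ε a = z 0 a)
    (hz : ∀ ε, IsIntegralCurveOn (z ε) (fun t y => G (y + (g t + ε * h t))) (Icc a b))
    {t : ℝ} (ht : t ∈ Icc a b) :
    HasDerivAt (fun ε => z ε t)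
      (Real.exp (∫ u in a..t, G' (z 0 u + g u)) *
        ∫ s in a..t, Real.exp (-∫ u in a..s, G' (z 0 u + g u)) *
          (G' (z 0 s + g s) * h s)) 0 := by
  have hG1 : ContDiff ℝ 1 G := contDiff_one_iff_deriv.2
    ⟨fun y => (hG y).differentiableAt, (funext fun y => (hG y).deriv : deriv G = G') ▸ hG'⟩
  have hq : ContinuousOn (fun s => G' (z 0 s + g s)) (Icc a b) :=
    hG'.comp_continuousOn ((hz 0).continuousOn.add hg)
  refine hasDerivAt_of_isIntegralCurveOn_perturbation hG1 hg hh hza hz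
    (w := fun t => Real.exp (∫ u in a..t, G' (z 0 u + g u)) *
        ∫ s in a..t, Real.exp (-∫ u in a..s, G' (z 0 u + g u)) *
          (G' (z 0 s + g s) * h s)) (by simp) (fun s hs => ?_) ht
  simpa [fderiv_eq_smul_deriv, (hG _).deriv, mul_comm] using!
    isIntegralCurveOn_exp_integral_mul hq hh s hs

end VariationOfConstants

section IntegralEquation

theorem measurable_of_eq_add_integral {f k : ℝ → ℝ} {α M : ℝ} (hk : ∀ x, |k x| ≤ M)
    (hf : ∀ β, f β = α + ∫ η in (0 : ℝ)..β, k η) : Measurable f := by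
  classical
  set S : Set ℝ := {β | IntervalIntegrable k volume 0 β}
  have hconn : S.OrdConnected := by
    refine ⟨fun x hx y hy z hz => hx.trans ?_⟩
    exact (hx.symm.trans hy).mono_set
      (uIcc_subset_uIcc left_mem_uIcc (Icc_subset_uIcc hz))
  have hcont : ContinuousOn f S := by
    refine (LipschitzOnWith.of_dist_le_mul (K := M.toNNReal) fun x hx y hy => ?_).continuousOn
    rw [Real.coe_toNNReal _ ((abs_nonneg _).trans (hk 0)), Real.dist_eq, Real.dist_eq, hf x, hf y,
      add_sub_add_left_eq_sub, intervalIntegral.integral_interval_sub_left hx hy]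
    exact intervalIntegral.norm_integral_le_of_norm_le_const (f := k) fun η _ => hk η
  -- Off `S` the integral takes the junk value `0`, so `f` is constant there.
  have hpiecewise : f = S.piecewise f fun _ => α := by
    funext x
    by_cases hx : x ∈ S
    · rw [piecewise_eq_of_mem _ _ _ hx]
    · rw [piecewise_eq_of_notMem _ _ _ hx, hf x, intervalIntegral.integral_undef hx, add_zero]
  rw [hpiecewise]
  exact hcont.measurable_piecewise continuousOn_const hconn.measurableSet

theorem continuous_of_integral_eq {f σ : ℝ → ℝ} {α M : ℝ} (hσ : Measurable σ)
    (hM : ∀ x, |σ x| ≤ M) (hf : ∀ β, f β = α + ∫ η in (0 : ℝ)..β, σ (f η)) : Continuous f := by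
  have hmeas : Measurable f := measurable_of_eq_add_integral (fun x => hM (f x)) hf
  have hint (x y : ℝ) : IntervalIntegrable (fun η => σ (f η)) volume x y :=
    (intervalIntegrable_const (c := M)).mono_fun (hσ.comp hmeas).aestronglyMeasurable
      (.of_forall fun η => (hM (f η)).trans (le_abs_self M))
  rw [funext hf]
  exact continuous_const.add (intervalIntegral.continuous_primitive hint 0)

end IntegralEquation

section Flow

/-- `φ α β` is the position at time `β` of the global flow of the vector field `σ` on `ℝ` started
at `α`. -/
structure IsFlowOf (φ : ℝ → ℝ → ℝ) (σ : ℝ → ℝ) : Prop where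
  map_zero (α : ℝ) : φ α 0 = α
  hasDerivAt (α β : ℝ) : HasDerivAt (φ α) (σ (φ α β)) β

/-- The Lamperti transform of the vector field `σ` based at `α`: the time that the flow of `σ`
takes from `α` to `x`. In this coordinate `σ` becomes the constant field `1`. -/
noncomputable def lamperti (σ : ℝ → ℝ) (α x : ℝ) : ℝ := ∫ u in α..x, (σ u)⁻¹

/-- The drift `b/σ` of the equation `dx = b(x) dt + σ(x) dg` in the Lamperti coordinate, read
along an integral curve `p` of `σ`. -/
noncomputable def lampertiDrift (b σ p : ℝ → ℝ) (y : ℝ) : ℝ := b (p y) / σ (p y)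

theorem injective_of_hasDerivAt_ne_zero {f f' : ℝ → ℝ} (hf : ∀ x, HasDerivAt f (f' x) x)
    (hne : ∀ x, f' x ≠ 0) : Function.Injective f := by
  rcases hasDerivWithinAt_forall_lt_or_forall_gt_of_forall_ne convex_univ
    (fun x _ => (hf x).hasDerivWithinAt) fun x _ => hne x with hneg | hpos
  · exact (strictAnti_of_hasDerivAt_neg hf fun x => hneg x (mem_univ x)).injective
  · exact (strictMono_of_hasDerivAt_pos hf fun x => hpos x (mem_univ x)).injective

variable {b σ : ℝ → ℝ} {φ : ℝ → ℝ → ℝ}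

theorem isFlowOf_of_integral_eq (hσ : Continuous σ) (hφc : ∀ α, Continuous (φ α))
    (hφ : ∀ α β, φ α β = α + ∫ η in (0 : ℝ)..β, σ (φ α η)) : IsFlowOf φ σ where
  map_zero α := by simp [hφ α 0]
  hasDerivAt α β := by
    have hderiv := ((hσ.comp (hφc α)).integral_hasStrictDerivAt 0 β).hasDerivAt.const_add α
    exact hderiv.congr_of_eventuallyEq (.of_forall (hφ α))

theorem IsFlowOf.continuous (hφ : IsFlowOf φ σ) (α : ℝ) : Continuous (φ α) :=
  continuous_iff_continuousAt.2 fun β => (hφ.hasDerivAt α β).continuousAt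

theorem hasDerivAt_lamperti (hσ : Continuous σ) (hne : ∀ x, σ x ≠ 0) (α x : ℝ) :
    HasDerivAt (lamperti σ α) (σ x)⁻¹ x :=
  ((hσ.inv₀ hne).integral_hasStrictDerivAt α x).hasDerivAt

theorem continuous_lamperti (hσ : Continuous σ) (hne : ∀ x, σ x ≠ 0) (α : ℝ) :
    Continuous (lamperti σ α) :=
  continuous_iff_continuousAt.2 fun x => (hasDerivAt_lamperti hσ hne α x).continuousAt

theorem lamperti_injective (hσ : Continuous σ) (hne : ∀ x, σ x ≠ 0) (α : ℝ) :
    Function.Injective (lamperti σ α) :=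
  injective_of_hasDerivAt_ne_zero (hasDerivAt_lamperti hσ hne α) fun x => inv_ne_zero (hne x)

theorem IsFlowOf.lamperti_apply (hφ : IsFlowOf φ σ) (hσ : Continuous σ) (hne : ∀ x, σ x ≠ 0)
    (α x β : ℝ) : lamperti σ α (φ x β) = lamperti σ α x + β := by
  have hderiv (β : ℝ) : HasDerivAt (fun β => lamperti σ α (φ x β) - β) 0 β := by
    simpa [hne] using!
      ((hasDerivAt_lamperti hσ hne α _).comp β (hφ.hasDerivAt x β)).sub (hasDerivAt_id β)
  have hconst := is_const_of_deriv_eq_zero (fun β => (hderiv β).differentiableAt)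
    (fun β => (hderiv β).deriv) β 0
  rw [hφ.map_zero, sub_zero] at hconst
  linarith

theorem IsFlowOf.apply_lamperti_add (hφ : IsFlowOf φ σ) (hσ : Continuous σ)
    (hne : ∀ x, σ x ≠ 0) (α x β : ℝ) : φ α (lamperti σ α x + β) = φ x β := by
  apply lamperti_injective hσ hne α
  rw [hφ.lamperti_apply hσ hne, hφ.lamperti_apply hσ hne, lamperti,
    intervalIntegral.integral_same, zero_add]

theorem IsFlowOf.exp_neg_integral_deriv_mul (hφ : IsFlowOf φ σ) (hσ : ContDiff ℝ 1 σ) (x y : ℝ) :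
    Real.exp (-∫ η in (0 : ℝ)..y, deriv σ (φ x η)) * σ (φ x y) = σ x := by
  have hσ' : Continuous fun η => deriv σ (φ x η) :=
    (hσ.continuous_deriv le_rfl).comp (hφ.continuous x)
  have hderiv (y : ℝ) : HasDerivAt
      (fun y => Real.exp (-∫ η in (0 : ℝ)..y, deriv σ (φ x η)) * σ (φ x y)) 0 y := by
    refine ((hσ'.integral_hasStrictDerivAt 0 y).hasDerivAt.neg.exp.mul
      ((hσ.differentiable one_ne_zero (φ x y)).hasDerivAt.comp y
        (hφ.hasDerivAt x y))).congr_deriv ?_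
    simp only [Pi.neg_apply, Function.comp_apply]
    ring
  have hconst := is_const_of_deriv_eq_zero (fun y => (hderiv y).differentiableAt)
    (fun y => (hderiv y).deriv) y 0
  simpa [hφ.map_zero] using hconst

theorem IsFlowOf.fsb_eq (hφ : IsFlowOf φ σ) (hσ : ContDiff ℝ 1 σ) (hne : ∀ x, σ x ≠ 0)
    (ξ x y : ℝ) :
    fsb b σ φ x y = σ x * lampertiDrift b σ (φ ξ) (lamperti σ ξ x + y) := by
  rw [fsb, lampertiDrift, hφ.apply_lamperti_add hσ.continuous hne,
    ← hφ.exp_neg_integral_deriv_mul hσ x y]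
  field_simp [hne (φ x y)]

theorem hasDerivAt_lampertiDrift {p : ℝ → ℝ} {y : ℝ} (hb : DifferentiableAt ℝ b (p y))
    (hσ : DifferentiableAt ℝ σ (p y)) (hne : σ (p y) ≠ 0) (hp : HasDerivAt p (σ (p y)) y) :
    HasDerivAt (lampertiDrift b σ p) (Wf b σ (p y) / σ (p y)) y := by
  refine ((hb.hasDerivAt.comp y hp).div (hσ.hasDerivAt.comp y hp) hne).congr_deriv ?_
  simp only [Wf, Function.comp_apply]
  field_simp

theorem continuous_Wf (hb : ContDiff ℝ 1 b) (hσ : ContDiff ℝ 1 σ) : Continuous (Wf b σ) :=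
  (hσ.continuous.mul (hb.continuous_deriv le_rfl)).sub
    ((hσ.continuous_deriv le_rfl).mul hb.continuous)

theorem IsFlowOf.isIntegralCurveOn_lamperti (hφ : IsFlowOf φ σ) (hb : Continuous b)
    (hσ : ContDiff ℝ 1 σ) (hne : ∀ x, σ x ≠ 0) {ξ T : ℝ} {a γ : ℝ → ℝ}
    (hγ : ContinuousOn γ (Icc 0 T)) (ha : ContinuousOn a (Icc 0 T))
    (haξ : ∀ t ∈ Icc 0 T, a t = ξ + ∫ u in (0 : ℝ)..t, fsb b σ φ (a u) (γ u)) :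
    IsIntegralCurveOn (fun t => lamperti σ ξ (a t))
      (fun t y => lampertiDrift b σ (φ ξ) (y + γ t)) (Icc 0 T) := by
  intro t ht
  have hdrift : Continuous (lampertiDrift b σ (φ ξ)) :=
    (hb.comp (hφ.continuous ξ)).div (hσ.continuous.comp (hφ.continuous ξ)) fun y => hne _
  have hfsb : ContinuousOn (fun u => fsb b σ φ (a u) (γ u)) (Icc 0 T) := by
    simp only [hφ.fsb_eq hσ hne ξ]
    exact (hσ.continuous.comp_continuousOn ha).mul (hdrift.comp_continuousOn
      (((continuous_lamperti hσ.continuous hne ξ).comp_continuousOn ha).add hγ))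
  have ha' := ((hasDerivWithinAt_integral_Icc hfsb ht).const_add ξ).congr haξ (haξ t ht)
  refine ((hasDerivAt_lamperti hσ.continuous hne ξ _).comp_hasDerivWithinAt t ha').congr_deriv ?_
  rw [hφ.fsb_eq hσ hne ξ, inv_mul_cancel_left₀ (hne _)]

end Flow

theorem integral_Jpath_mul_inv_Jpath_mul {b σ x h : ℝ → ℝ} {ξ : ℝ} (hne : ∀ x, σ x ≠ 0) (t : ℝ) :
    ∫ s in (0 : ℝ)..t, Jpath b σ ξ x t * (Jpath b σ ξ x s)⁻¹ * Wf b σ (x s) * h s =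
      σ (x t) * (Real.exp (∫ u in (0 : ℝ)..t, Wf b σ (x u) / σ (x u)) *
        ∫ s in (0 : ℝ)..t, Real.exp (-∫ u in (0 : ℝ)..s, Wf b σ (x u) / σ (x u)) *
          (Wf b σ (x s) / σ (x s) * h s)) := by
  rw [← mul_assoc, ← intervalIntegral.integral_const_mul]
  refine intervalIntegral.integral_congr fun s _ => ?_
  have hξ := hne ξ
  have hs := hne (x s)
  simp only [Jpath, Real.exp_neg]
  field_simp

theorem CbN.exists_forall_abs_le {n : ℕ} {f : ℝ → ℝ} (hf : CbN n f) : ∃ M, ∀ x, |f x| ≤ M := by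
  simpa only [iteratedDeriv_zero] using hf.2 0 n.zero_le

theorem continuousOn_of_abs_sub_le_rpow {s : Set ℝ} {g : ℝ → ℝ} {r C : ℝ} (hr : 0 < r)
    (hg : ∀ x ∈ s, ∀ y ∈ s, |g y - g x| ≤ C * |y - x| ^ r) : ContinuousOn g s := by
  intro x hx
  have hlim : Tendsto (fun y => C * |y - x| ^ r) (𝓝[s] x) (𝓝 0) := by
    have hcont : Continuous fun y => C * |y - x| ^ r :=
      continuous_const.mul ((by fun_prop : Continuous fun y : ℝ => |y - x|).rpow_const
        fun _ => .inr hr.le)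
    simpa [Real.zero_rpow hr.ne'] using (hcont.tendsto x).mono_left nhdsWithin_le_nhds
  exact tendsto_iff_norm_sub_tendsto_zero.2
    (squeeze_zero' (.of_forall fun _ => norm_nonneg _)
      (eventually_mem_nhdsWithin.mono fun y hy => hg x hx y hy) hlim)

theorem stmt11_general (ξ : ℝ) (b σ : ℝ → ℝ) (hb : ContDiff ℝ 1 b) (hσ : ContDiff ℝ 1 σ)
    (hne : ∀ x, σ x ≠ 0)
    (φ : ℝ → ℝ → ℝ) (hφc : ∀ α, Continuous (φ α))
    (hφ : ∀ α β : ℝ, φ α β = α + ∫ η in (0:ℝ)..β, σ (φ α η))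
    (A : (ℝ → ℝ) → ℝ → ℝ)
    (hA : ∀ g : ℝ → ℝ, ContinuousOn g (Icc 0 1) → g 0 = 0 →
      ContinuousOn (A g) (Icc 0 1) ∧
      ∀ t ∈ Icc (0:ℝ) 1, A g t = ξ + ∫ u in (0:ℝ)..t, fsb b σ φ (A g u) (g u))
    (g h : ℝ → ℝ) (hg : ContinuousOn g (Icc 0 1)) (hg0 : g 0 = 0)
    (hh : ContinuousOn h (Icc 0 1)) (hh0 : h 0 = 0) (t : ℝ) (ht : t ∈ Icc (0:ℝ) 1) :
    HasDerivAt (fun ε : ℝ => φ (A (fun u => g u + ε * h u) t) (g t + ε * h t))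
      (σ (φ (A g t) (g t)) * h t
        + ∫ s in (0:ℝ)..t,
            Jpath b σ ξ (fun u => φ (A g u) (g u)) t
              * (Jpath b σ ξ (fun u => φ (A g u) (g u)) s)⁻¹
              * Wf b σ (φ (A g s) (g s)) * h s) 0 := by
  have hflow : IsFlowOf φ σ := isFlowOf_of_integral_eq hσ.continuous hφc hφ
  have hgε (ε : ℝ) : ContinuousOn (fun u => g u + ε * h u) (Icc 0 1) := hg.add (hh.const_mul ε)
  have hAε (ε : ℝ) := hA _ (hgε ε) (by simp [hg0, hh0])
  set z : ℝ → ℝ → ℝ := fun ε t => lamperti σ ξ (A (fun u => g u + ε * h u) t) with hz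
  have hx (ε u : ℝ) : φ ξ (z ε u + (g u + ε * h u)) =
      φ (A (fun u => g u + ε * h u) u) (g u + ε * h u) :=
    hflow.apply_lamperti_add hσ.continuous hne ξ _ _
  have hx0 (u : ℝ) : φ ξ (z 0 u + g u) = φ (A g u) (g u) := by simpa using hx 0 u
  have hz0 (ε : ℝ) : z ε 0 = lamperti σ ξ ξ := by simp [hz, (hAε ε).2 0]
  have hz' : HasDerivAt (fun ε => z ε t) _ 0 := hasDerivAt_of_isIntegralCurveOn_perturbation_real
    (fun y => hasDerivAt_lampertiDrift (hb.differentiable one_ne_zero _)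
      (hσ.differentiable one_ne_zero _) (hne _) (hflow.hasDerivAt ξ y))
    (((continuous_Wf hb hσ).div hσ.continuous hne).comp (hφc ξ)) hg hh
    (fun ε => (hz0 ε).trans (hz0 0).symm)
    (fun ε => hflow.isIntegralCurveOn_lamperti hb.continuous hσ hne (hgε ε) (hAε ε).1 (hAε ε).2) ht
  have hlin : HasDerivAt (fun ε : ℝ => g t + ε * h t) (h t) 0 := by
    simpa using ((hasDerivAt_id (0 : ℝ)).mul_const (h t)).const_add (g t)
  have hmain := (hflow.hasDerivAt ξ (z 0 t + (g t + 0 * h t))).comp 0 (hz'.add hlin)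
  refine (hmain.congr_of_eventuallyEq (.of_forall fun ε => (hx ε t).symm)).congr_deriv ?_
  rw [integral_Jpath_mul_inv_Jpath_mul hne]
  simp only [zero_mul, add_zero, hx0]
  ring

theorem stmt11
    (lam : ℝ) (hlam1 : 1/3 < lam) (hlam2 : lam < 1)
    (ξ : ℝ) (b σ : ℝ → ℝ) (hb : CbN 2 b) (hσ : CbN 2 σ)
    (hσpos : ∃ c : ℝ, 0 < c ∧ ∀ x : ℝ, c ≤ σ x)
    (φ : ℝ → ℝ → ℝ) (hφ : ∀ α β : ℝ, φ α β = α + ∫ η in (0:ℝ)..β, σ (φ α η))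
    -- `A g` is the Doss–Sussmann auxiliary path for the driver `g`, so that
    -- `x_t(ξ,g) = φ(A g t, g t)`
    (A : (ℝ → ℝ) → ℝ → ℝ)
    (hA : ∀ g : ℝ → ℝ, ContinuousOn g (Set.Icc 0 1) → g 0 = 0 →
      ContinuousOn (A g) (Set.Icc 0 1) ∧
      ∀ t ∈ Set.Icc (0:ℝ) 1, A g t = ξ + ∫ u in (0:ℝ)..t, fsb b σ φ (A g u) (g u)) :
    ∀ g h : ℝ → ℝ,
      (∃ Cg : ℝ, ∀ s ∈ Set.Icc (0:ℝ) 1, ∀ t ∈ Set.Icc (0:ℝ) 1,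
        |g t - g s| ≤ Cg * |t - s| ^ lam) → g 0 = 0 →
      (∃ Ch : ℝ, ∀ s ∈ Set.Icc (0:ℝ) 1, ∀ t ∈ Set.Icc (0:ℝ) 1,
        |h t - h s| ≤ Ch * |t - s| ^ lam) → h 0 = 0 →
      ∀ t ∈ Set.Icc (0:ℝ) 1,
        HasDerivAt (fun ε : ℝ => φ (A (fun u => g u + ε * h u) t) (g t + ε * h t))
          (σ (φ (A g t) (g t)) * h t
            + ∫ s in (0:ℝ)..t,
                Jpath b σ ξ (fun u => φ (A g u) (g u)) t
                  * (Jpath b σ ξ (fun u => φ (A g u) (g u)) s)⁻¹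
                  * Wf b σ (φ (A g s) (g s)) * h s) 0 := by
  obtain ⟨c, hc, hcσ⟩ := hσpos
  obtain ⟨M, hM⟩ := hσ.exists_forall_abs_le
  have hr : 0 < lam := by linarith
  exact fun g h ⟨_, hg⟩ hg0 ⟨_, hh⟩ hh0 => stmt11_general ξ b σ (hb.1.of_le one_le_two)
    (hσ.1.of_le one_le_two) (fun x => (hc.trans_le (hcσ x)).ne') φ
    (fun α => continuous_of_integral_eq hσ.1.continuous.measurable hM (hφ α)) hφ A hA g h
    (continuousOn_of_abs_sub_le_rpow hr hg) hg0 (continuousOn_of_abs_sub_le_rpow hr hh) hh0
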